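/- arXiv:1310.0557 — 2 statements merged into one kernel-verified Lean document; each statement's English description precedes it below -/
import Mathlib

section
/- Let p_1, …, p_n be pairwise distinct prime numbers and let ε ∈ {-1,0,1}^n with ε not identically zero. Then ∑_{i=1}^n ε_i / p_i ≠ 0. -/
/-!
Multiplying `∑ i, a i / p i` by `∏ i, p i` clears the denominators, and modulo `p k` only the
summand `a k * ∏ i ≠ k, p i` survives. As `p k` is coprime to the other `p i`, this product is
invertible modulo `p k`, so a vanishing sum forces `p k ∣ a k`, which fails for `a k = ±1`
and `p k` prime.
-/

open Finset

section ClearDenominators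

variable {ι : Type*} [DecidableEq ι] {s : Finset ι}

theorem sum_div_mul_prod_eq_sum_mul_prod_erase {K : Type*} [Semifield K] {p : ι → K}
    (hp : ∀ i ∈ s, p i ≠ 0) (a : ι → K) :
    (∑ i ∈ s, a i / p i) * ∏ i ∈ s, p i = ∑ i ∈ s, a i * ∏ j ∈ s.erase i, p j := by
  rw [sum_mul]
  refine sum_congr rfl fun i hi => ?_
  rw [← mul_prod_erase s p hi, ← mul_assoc, div_mul_cancel₀ _ (hp i hi)]

theorem dvd_of_dvd_sum_mul_prod_erase {R : Type*} [CommRing R] {p a : ι → R} {k : ι} (hk : k ∈ s)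
    (hcop : ∀ i ∈ s, i ≠ k → IsCoprime (p k) (p i))
    (hdvd : p k ∣ ∑ i ∈ s, a i * ∏ j ∈ s.erase i, p j) : p k ∣ a k := by
  have other_terms : p k ∣ ∑ i ∈ s.erase k, a i * ∏ j ∈ s.erase i, p j :=
    dvd_sum fun i hi => Dvd.dvd.mul_left
      (dvd_prod_of_mem p (mem_erase.mpr ⟨(ne_of_mem_erase hi).symm, hk⟩)) (a i)
  have kth_term : p k ∣ a k * ∏ j ∈ s.erase k, p j := by
    rwa [← add_sum_erase s _ hk, dvd_add_left other_terms] at hdvd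
  have coprime_prod : IsCoprime (p k) (∏ j ∈ s.erase k, p j) :=
    IsCoprime.prod_right fun j hj => hcop j (mem_of_mem_erase hj) (ne_of_mem_erase hj)
  exact coprime_prod.dvd_of_dvd_mul_right kth_term

end ClearDenominators

theorem signed_sum_prime_reciprocals_ne_zero_general {ι R K : Type*} [CommRing R] [Field K]
    [Algebra R K] [FaithfulSMul R K] {s : Finset ι} {p a : ι → R} {k : ι}
    (hp : ∀ i ∈ s, p i ≠ 0) (hk : k ∈ s) (hcop : ∀ i ∈ s, i ≠ k → IsCoprime (p k) (p i))
    (hndvd : ¬ p k ∣ a k) :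
    ∑ i ∈ s, algebraMap R K (a i) / algebraMap R K (p i) ≠ 0 := by
  classical
  intro hsum
  have algebraMap_inj : Function.Injective (algebraMap R K) :=
    FaithfulSMul.algebraMap_injective R K
  have algebraMap_ne_zero : ∀ i ∈ s, algebraMap R K (p i) ≠ 0 := fun i hi =>
    (map_ne_zero_iff _ algebraMap_inj).mpr (hp i hi)
  have cleared : ∑ i ∈ s, a i * ∏ j ∈ s.erase i, p j = 0 := by
    apply algebraMap_inj
    simp only [map_sum, map_mul, map_prod, map_zero]
    rw [← sum_div_mul_prod_eq_sum_mul_prod_erase algebraMap_ne_zero, hsum, zero_mul]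
  exact hndvd (dvd_of_dvd_sum_mul_prod_erase hk hcop (cleared ▸ dvd_zero _))

/-- For pairwise distinct primes `p 1, …, p n` and `ε ∈ {-1,0,1}^n` not
identically zero, `∑ i, ε i / p i ≠ 0`. -/
theorem signed_sum_prime_reciprocals_ne_zero (n : ℕ) (p : Fin n → ℕ)
    (hp : ∀ i, Nat.Prime (p i)) (hdist : Function.Injective p)
    (ε : Fin n → ℤ) (hε : ∀ i, ε i = -1 ∨ ε i = 0 ∨ ε i = 1) (hne : ∃ i, ε i ≠ 0) :
    ∑ i, (ε i : ℝ) / (p i : ℝ) ≠ 0 := by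
  obtain ⟨k, hk⟩ := hne
  have isUnit_sign : IsUnit (ε k) := Int.isUnit_iff.mpr (by grind)
  have not_dvd_sign : ¬ (p k : ℤ) ∣ ε k :=
    (Nat.prime_iff_prime_int.mp (hp k)).irreducible.not_dvd_isUnit isUnit_sign
  have coprime : ∀ i ∈ univ, i ≠ k → IsCoprime (p k : ℤ) (p i) := fun i _ hik =>
    Nat.isCoprime_iff_coprime.mpr ((Nat.coprime_primes (hp k) (hp i)).mpr (hdist.ne hik.symm))
  simpa using signed_sum_prime_reciprocals_ne_zero_general (K := ℝ) (p := fun i => (p i : ℤ))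
    (fun i _ => Nat.cast_ne_zero.mpr (hp i).ne_zero) (mem_univ k) coprime not_dvd_sign
end

section
/- Let k ≥ 1 and let f_0, f_1, …, f_T be a sequence of functions from {1,…,k} to ℕ such that f_0 is identically 0 and, for each t < T, f_{t+1} = f_t + 1_{S_t} for some subset S_t ⊆ {1,…,k} of size d with the property that every j ∈ S_t satisfies f_t(j) ≤ f_t(j') for all j' ∉ S_t. Then every value of f_T lies in {⌊Td/k⌋, ⌈Td/k⌉}. -/
open Finset
open scoped BigOperators

/-! Two invariants carry the argument: incrementing a set of lowest values keeps any two values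
within `1` of each other, and each step adds the size of the incremented set to the total. Values
that pairwise differ by at most `1` lie at distance strictly less than `1` from their mean, because
a value differs from itself by `0`; an integer that close to a number is its floor or its ceiling.
-/

theorem eq_floor_or_eq_ceil_of_abs_sub_lt_one {R : Type*} [Ring R] [LinearOrder R]
    [IsStrictOrderedRing R] [FloorRing R] {z : ℤ} {x : R} (h : |z - x| < 1) :
    z = ⌊x⌋ ∨ z = ⌈x⌉ := by
  obtain ⟨hlower, hupper⟩ := abs_sub_lt_iff.mp h
  rcases le_total (z : R) x with hzx | hxz
  · exact .inl (Int.floor_eq_iff.mpr ⟨hzx, sub_lt_iff_lt_add'.mp hupper⟩).symm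
  · exact .inr (Int.ceil_eq_iff.mpr ⟨sub_lt_comm.mp hlower, hxz⟩).symm

section Equitable

variable {ι : Type*}

theorem abs_sub_expect_lt_one_of_equitableOn {K : Type*} [Field K] [LinearOrder K]
    [IsStrictOrderedRing K] {s : Finset ι} {f : ι → K} (hf : (s : Set ι).EquitableOn f)
    {a : ι} (ha : a ∈ s) : |f a - 𝔼 i ∈ s, f i| < 1 := by
  have lower : f a - 1 < 𝔼 i ∈ s, f i :=
    lt_expect (fun i hi ↦ sub_le_iff_le_add.mpr (hf ha hi)) ⟨a, ha, sub_one_lt _⟩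
  have upper : 𝔼 i ∈ s, f i < f a + 1 :=
    expect_lt (fun i hi ↦ hf hi ha) ⟨a, ha, lt_add_one _⟩
  exact abs_sub_lt_iff.mpr ⟨sub_lt_comm.mp lower, sub_lt_iff_lt_add'.mpr upper⟩

theorem eq_floor_or_eq_ceil_average_of_equitableOn {s : Finset ι} {f : ι → ℕ}
    (hf : (s : Set ι).EquitableOn f) {a : ι} (ha : a ∈ s) :
    (f a : ℤ) = ⌊((∑ i ∈ s, f i : ℕ) / #s : ℚ)⌋ ∨
      (f a : ℤ) = ⌈((∑ i ∈ s, f i : ℕ) / #s : ℚ)⌉ := by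
  have equitable_cast : (s : Set ι).EquitableOn fun i ↦ (f i : ℚ) := by
    intro i j hi hj
    change (f i : ℚ) ≤ f j + 1
    exact_mod_cast hf hi hj
  apply eq_floor_or_eq_ceil_of_abs_sub_lt_one
  rw [Nat.cast_sum, ← expect_eq_sum_div_card, Int.cast_natCast]
  exact abs_sub_expect_lt_one_of_equitableOn equitable_cast ha

variable [DecidableEq ι] {M : Type*} [AddMonoidWithOne M] [Preorder M] [AddLeftMono M]
  [AddRightMono M] [ZeroLEOneClass M] {s : Set ι}

theorem equitableOn_add_ite_of_le {f : ι → M} (hf : s.EquitableOn f) {S : Finset ι}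
    (hmin : ∀ i ∈ s ∩ S, ∀ j ∈ s \ S, f i ≤ f j) :
    s.EquitableOn fun i ↦ f i + if i ∈ S then 1 else 0 := by
  intro i j hi hj
  have hij : f i ≤ f j + 1 := hf hi hj
  by_cases hiS : i ∈ S <;> by_cases hjS : j ∈ S <;>
    simp only [hiS, hjS, if_true, if_false, add_zero]
  · gcongr
  · gcongr
    exact hmin i ⟨hi, hiS⟩ j ⟨hj, hjS⟩
  · exact hij.trans (le_add_of_nonneg_right zero_le_one)
  · exact hij

theorem equitableOn_of_greedy_steps {T : ℕ} {f : ℕ → ι → M} {S : ℕ → Finset ι}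
    (h0 : s.EquitableOn (f 0))
    (hstep : ∀ t < T, ∀ j, f (t + 1) j = f t j + if j ∈ S t then 1 else 0)
    (hmin : ∀ t < T, ∀ i ∈ s ∩ S t, ∀ j ∈ s \ S t, f t i ≤ f t j) :
    s.EquitableOn (f T) := by
  induction T with
  | zero => exact h0
  | succ T ih =>
    rw [funext (hstep T T.lt_succ_self)]
    exact equitableOn_add_ite_of_le
      (ih (fun t ht ↦ hstep t (ht.trans T.lt_succ_self))
        fun t ht ↦ hmin t (ht.trans T.lt_succ_self))
      (hmin T T.lt_succ_self)

end Equitable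

section Greedy

variable {ι : Type*} [DecidableEq ι] [Fintype ι] {T : ℕ} {f : ℕ → ι → ℕ} {S : ℕ → Finset ι}

theorem sum_eq_sum_zero_add_sum_card
    (hstep : ∀ t < T, ∀ j, f (t + 1) j = f t j + if j ∈ S t then 1 else 0) :
    ∑ j, f T j = ∑ j, f 0 j + ∑ t ∈ range T, #(S t) := by
  induction T with
  | zero => rw [sum_range_zero, add_zero]
  | succ T ih =>
    have sum_step : ∑ j, f (T + 1) j = ∑ j, f T j + #(S T) := by
      simp [hstep T T.lt_succ_self, sum_add_distrib]
    rw [sum_step, ih fun t ht ↦ hstep t (ht.trans T.lt_succ_self), sum_range_succ, add_assoc]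

theorem greedy_degrees_floor_ceil_general
    (h0 : (Set.univ : Set ι).EquitableOn (f 0))
    (hstep : ∀ t < T, ∀ j, f (t + 1) j = f t j + if j ∈ S t then 1 else 0)
    (hmin : ∀ t < T, ∀ i ∈ S t, ∀ j ∉ S t, f t i ≤ f t j) (j : ι) :
    (f T j : ℤ) = ⌊((∑ i, f 0 i + ∑ t ∈ range T, #(S t) : ℕ) / Fintype.card ι : ℚ)⌋ ∨
      (f T j : ℤ) = ⌈((∑ i, f 0 i + ∑ t ∈ range T, #(S t) : ℕ) / Fintype.card ι : ℚ)⌉ := by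
  have equitable : (Set.univ : Set ι).EquitableOn (f T) :=
    equitableOn_of_greedy_steps h0 hstep fun t ht i hi j hj ↦ hmin t ht i hi.2 j hj.2
  rw [← coe_univ] at equitable
  rw [← sum_eq_sum_zero_add_sum_card hstep]
  exact eq_floor_or_eq_ceil_average_of_equitableOn equitable (mem_univ j)

end Greedy

/-- Starting from the all-zero degree profile on `{1,…,k}` and, for `T`
steps, incrementing the degrees of a set `S t` of exactly `d` nodes whose current degrees
do not exceed the degree of any node outside `S t`, every final degree `f T j` equals
`⌊T*d/k⌋` or `⌈T*d/k⌉`. -/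
theorem greedy_degrees_floor_ceil (k : ℕ) (hk : 1 ≤ k) (T d : ℕ)
    (f : ℕ → Fin k → ℕ) (S : ℕ → Finset (Fin k))
    (h0 : ∀ j, f 0 j = 0)
    (hcard : ∀ t < T, (S t).card = d)
    (hstep : ∀ t < T, ∀ j, f (t + 1) j = f t j + if j ∈ S t then 1 else 0)
    (hmin : ∀ t < T, ∀ j ∈ S t, ∀ j' ∉ S t, f t j ≤ f t j') :
    ∀ j, (f T j : ℤ) = ⌊((T : ℚ) * d / k : ℚ)⌋ ∨ (f T j : ℤ) = ⌈((T : ℚ) * d / k : ℚ)⌉ := by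
  have sum_card : ∑ t ∈ range T, #(S t) = #(range T) * d :=
    sum_const_nat fun t ht ↦ hcard t (mem_range.mp ht)
  simpa [h0, sum_card] using greedy_degrees_floor_ceil_general (by simp [Set.EquitableOn, h0])
    hstep hmin
end
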